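/- Let A ∈ ℝ^{m×n} have columns of unit ℓ2-norm and mutual coherence μ, let k ≥ 2 be an integer with μ < 1/(2k−1), let λ > 0, let b = Ax + z with ‖z‖₂ ≤ λ, and let x^♯ be a minimizer of u ↦ ‖u‖₁ + (1/(2λ))‖b − Au‖₂². Then ‖x^♯ − x‖₂ ≤ Ĉ₃·‖x − x_[k]‖₁ + Ĉ₄·λ, where Ĉ₃ = (2√k·α₁·f_k(α₂) + 2·g_k(α₂))/(√k·(1 − √k·α₂)·(√k·α₁ + 1)) and Ĉ₄ = (√k·α₁·(5 + 2√k·α₂) + 2·g_k(α₂))·(√k·α₁ + 1)/(√k·(1 − √k·α₂)), with α₁ = √(1+(k−1)μ)/(1−(k−1)μ), α₂ = √k·μ/(1−(k−1)μ), f_k(t) = k t² + 3√k t + 3, and g_k(t) = 2k t² + 4√k t + 1. -/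

import Mathlib

noncomputable def l2norm {ι : Type*} [Fintype ι] (v : ι → ℝ) : ℝ :=
  Real.sqrt (∑ i, (v i) ^ 2)

noncomputable def l1norm {ι : Type*} [Fintype ι] (v : ι → ℝ) : ℝ :=
  ∑ i, |v i|

noncomputable def linfnorm {ι : Type*} [Fintype ι] (v : ι → ℝ) : ℝ :=
  ⨆ i, |v i|

/-- The mutual coherence of a matrix: the largest absolute inner product
between two distinct columns. -/
noncomputable def mutualCoherence {m n : ℕ} (A : Matrix (Fin m) (Fin n) ℝ) : ℝ :=
  ⨆ p : {p : Fin n × Fin n // p.1 ≠ p.2}, |∑ r, A r p.1.1 * A r p.1.2|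

/-- `restrict v E` agrees with `v` on `E` and vanishes outside of `E`. -/
def restrict {n : ℕ} (v : Fin n → ℝ) (E : Finset (Fin n)) : Fin n → ℝ :=
  fun i => if i ∈ E then v i else 0

/-- A vector is `k`-sparse if it has at most `k` nonzero entries. -/
def sparse {n : ℕ} (k : ℕ) (v : Fin n → ℝ) : Prop :=
  (Finset.univ.filter fun i => v i ≠ 0).card ≤ k

noncomputable def alpha1 (k : ℕ) (μ : ℝ) : ℝ :=
  Real.sqrt (1 + ((k : ℝ) - 1) * μ) / (1 - ((k : ℝ) - 1) * μ)

noncomputable def alpha2 (k : ℕ) (μ : ℝ) : ℝ :=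
  Real.sqrt k * μ / (1 - ((k : ℝ) - 1) * μ)

noncomputable def fk (k : ℕ) (t : ℝ) : ℝ :=
  (k : ℝ) * t ^ 2 + 3 * Real.sqrt k * t + 3

noncomputable def gk (k : ℕ) (t : ℝ) : ℝ :=
  2 * (k : ℝ) * t ^ 2 + 4 * Real.sqrt k * t + 1

/-!
Put `h = x♯ - x` and let `T` be the support of `x_[k]`. Comparing the objective at `x♯` and at `x`
bounds `‖h_{Tᶜ}‖₁ - ‖h_T‖₁` by `‖A h‖₂ - ‖A h‖₂² / (2λ) + 2 ‖x - x_[k]‖₁`. Incoherence bounds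
`‖h_T‖₂`, hence `‖h_T‖₁`, by `‖A h‖₂` and `‖h_{Tᶜ}‖₁`. The two combine into one inequality whose
negative quadratic term in `‖A h‖₂` controls both `‖A h‖₂` and `‖h_{Tᶜ}‖₁`. Incoherence applied
again, to the `k` largest entries of `h`, then bounds `‖h‖₂`.
-/

open Finset Matrix

section Norms

variable {ι : Type*} [Fintype ι]

lemma l2norm_nonneg (v : ι → ℝ) : 0 ≤ l2norm v := Real.sqrt_nonneg _

lemma l1norm_nonneg (v : ι → ℝ) : 0 ≤ l1norm v := sum_nonneg fun _ _ => abs_nonneg _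

lemma l2norm_sq_eq_sum (v : ι → ℝ) : l2norm v ^ 2 = ∑ i, v i ^ 2 :=
  Real.sq_sqrt (by positivity)

lemma l2norm_sq_eq_dotProduct (v : ι → ℝ) : l2norm v ^ 2 = v ⬝ᵥ v := by
  rw [l2norm_sq_eq_sum]
  simp only [dotProduct, sq]

lemma dotProduct_le_l2norm_mul_l2norm (u v : ι → ℝ) : u ⬝ᵥ v ≤ l2norm u * l2norm v :=
  Real.sum_mul_le_sqrt_mul_sqrt _ _ _

lemma l2norm_sub_sq (u v : ι → ℝ) :
    l2norm (u - v) ^ 2 = l2norm u ^ 2 - 2 * (u ⬝ᵥ v) + l2norm v ^ 2 := by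
  simp only [l2norm_sq_eq_dotProduct, sub_dotProduct, dotProduct_sub, dotProduct_comm v u]
  ring

lemma l1norm_indicator (S : Finset ι) (v : ι → ℝ) :
    l1norm ((S : Set ι).indicator v) = ∑ i ∈ S, |v i| := by
  classical
  simp [l1norm, Set.indicator_apply, apply_ite abs]

lemma l2norm_indicator_sq (S : Finset ι) (v : ι → ℝ) :
    l2norm ((S : Set ι).indicator v) ^ 2 = ∑ i ∈ S, v i ^ 2 := by
  classical
  simp [l2norm_sq_eq_sum, Set.indicator_apply, ite_pow]

lemma card_indicator_ne_zero_le (S : Finset ι) (v : ι → ℝ) :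
    #{i | (S : Set ι).indicator v i ≠ 0} ≤ #S :=
  card_le_card fun i hi => by
    simpa using Set.mem_of_indicator_ne_zero (mem_filter.1 hi).2

lemma l1norm_sq_le_mul_l2norm_sq {k : ℕ} {v : ι → ℝ} (hv : #{i | v i ≠ 0} ≤ k) :
    l1norm v ^ 2 ≤ k * l2norm v ^ 2 := by
  have hsupp : l1norm v = ∑ i with v i ≠ 0, |v i| :=
    (sum_filter_of_ne fun i _ hi => abs_ne_zero.1 hi).symm
  calc l1norm v ^ 2 ≤ #{i | v i ≠ 0} * ∑ i with v i ≠ 0, |v i| ^ 2 :=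
        hsupp ▸ sq_sum_le_card_mul_sum_sq
    _ ≤ k * ∑ i, |v i| ^ 2 := by
        gcongr
        exact filter_subset _ _
    _ = k * l2norm v ^ 2 := by simp only [sq_abs, l2norm_sq_eq_sum]

lemma l1norm_le_sqrt_mul_l2norm {k : ℕ} {v : ι → ℝ} (hv : #{i | v i ≠ 0} ≤ k) :
    l1norm v ≤ √k * l2norm v := by
  rw [← Real.sqrt_sq (l2norm_nonneg v), ← Real.sqrt_mul (Nat.cast_nonneg k)]
  exact Real.le_sqrt_of_sq_le (l1norm_sq_le_mul_l2norm_sq hv)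

lemma sum_abs_le_sqrt_mul_l2norm_indicator {k : ℕ} {S : Finset ι} (hS : #S ≤ k) (v : ι → ℝ) :
    ∑ i ∈ S, |v i| ≤ √k * l2norm ((S : Set ι).indicator v) := by
  rw [← l1norm_indicator]
  exact l1norm_le_sqrt_mul_l2norm ((card_indicator_ne_zero_le S v).trans hS)

variable [DecidableEq ι]

lemma sum_compl_abs_sub_sum_abs_le (T : Finset ι) (x y : ι → ℝ) :
    ∑ i ∈ Tᶜ, |(y - x) i| - ∑ i ∈ T, |(y - x) i| ≤
      l1norm y - l1norm x + 2 * ∑ i ∈ Tᶜ, |x i| := by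
  have on_T : ∑ i ∈ T, |x i| ≤ ∑ i ∈ T, |y i| + ∑ i ∈ T, |(y - x) i| := by
    rw [← sum_add_distrib]
    gcongr with i
    rw [Pi.sub_apply, abs_sub_comm]
    linarith [abs_sub_abs_le_abs_sub (x i) (y i)]
  have off_T : ∑ i ∈ Tᶜ, |(y - x) i| ≤ ∑ i ∈ Tᶜ, |y i| + ∑ i ∈ Tᶜ, |x i| := by
    rw [← sum_add_distrib]
    gcongr with i
    exact abs_sub (y i) (x i)
  rw [l1norm, l1norm, ← sum_add_sum_compl T fun i => |y i|, ← sum_add_sum_compl T fun i => |x i|]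
  linarith

lemma sum_compl_support_abs_le_l1norm_sub (x y : ι → ℝ) :
    ∑ i ∈ ({i | y i ≠ 0} : Finset ι)ᶜ, |x i| ≤ l1norm (x - y) :=
  calc ∑ i ∈ ({i | y i ≠ 0} : Finset ι)ᶜ, |x i|
      = ∑ i ∈ ({i | y i ≠ 0} : Finset ι)ᶜ, |(x - y) i| :=
        sum_congr rfl fun i hi => by
          have hyi : y i = 0 := by simpa using hi
          rw [Pi.sub_apply, hyi, sub_zero]
    _ ≤ l1norm (x - y) :=
        sum_le_univ_sum_of_nonneg fun _ => abs_nonneg _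

end Norms

section TopSupport

variable {ι : Type*}

/-- `S` carries the largest `ℓ1` mass of `v` among the index sets with at most `k` elements, i.e. it
supports a best `k`-term approximation of `v`. -/
structure IsTopSupport (k : ℕ) (v : ι → ℝ) (S : Finset ι) : Prop where
  card_le : #S ≤ k
  sum_abs_le : ∀ T : Finset ι, #T ≤ k → ∑ i ∈ T, |v i| ≤ ∑ i ∈ S, |v i|

lemma exists_isTopSupport [Finite ι] (k : ℕ) (v : ι → ℝ) : ∃ S, IsTopSupport k v S := by
  have := Fintype.ofFinite ι
  obtain ⟨S, hS, hmax⟩ := exists_max_image {T : Finset ι | #T ≤ k}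
    (fun T => ∑ i ∈ T, |v i|) ⟨∅, by simp⟩
  simp only [mem_filter_univ] at hS hmax
  exact ⟨S, hS, hmax⟩

namespace IsTopSupport

variable {k : ℕ} {v : ι → ℝ} {S : Finset ι}

lemma abs_le_abs (hS : IsTopSupport k v S) {i j : ι} (hi : i ∉ S) (hj : j ∈ S) :
    |v i| ≤ |v j| := by
  classical
  have hi' : i ∉ S.erase j := fun h => hi (mem_of_mem_erase h)
  have hcard : #(insert i (S.erase j)) = #S := by
    rw [card_insert_of_notMem hi', card_erase_add_one hj]
  have hswap := hS.sum_abs_le _ (hcard.trans_le hS.card_le)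
  rw [sum_insert hi', ← add_sum_erase S _ hj] at hswap
  linarith

lemma eq_zero_of_card_lt (hS : IsTopSupport k v S) (hlt : #S < k) {i : ι} (hi : i ∉ S) :
    v i = 0 := by
  classical
  have hadd := hS.sum_abs_le (insert i S) (by rwa [card_insert_of_notMem hi])
  rw [sum_insert hi] at hadd
  exact abs_nonpos_iff.1 (by linarith)

lemma mul_abs_le_sum_abs (hS : IsTopSupport k v S) {i : ι} (hi : i ∉ S) :
    k * |v i| ≤ ∑ j ∈ S, |v j| := by
  rcases hS.card_le.lt_or_eq with hlt | rfl
  · rw [hS.eq_zero_of_card_lt hlt hi, abs_zero, mul_zero]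
    exact sum_nonneg fun _ _ => abs_nonneg _
  · rw [← nsmul_eq_mul]
    exact card_nsmul_le_sum _ _ _ fun j hj => hS.abs_le_abs hi hj

variable [Fintype ι] [DecidableEq ι]

lemma sum_compl_abs_le (hS : IsTopSupport k v S) {T : Finset ι} (hT : #T ≤ k) :
    ∑ i ∈ Sᶜ, |v i| ≤ ∑ i ∈ Tᶜ, |v i| := by
  linarith [hS.sum_abs_le T hT, sum_add_sum_compl S fun i => |v i|,
    sum_add_sum_compl T fun i => |v i|]

lemma mul_sum_compl_sq_le (hS : IsTopSupport k v S) :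
    k * ∑ i ∈ Sᶜ, v i ^ 2 ≤ (∑ i ∈ S, |v i|) * ∑ i ∈ Sᶜ, |v i| := by
  rw [mul_sum, mul_sum]
  refine sum_le_sum fun i hi => ?_
  calc k * v i ^ 2 = k * |v i| * |v i| := by rw [← sq_abs]; ring
    _ ≤ (∑ j ∈ S, |v j|) * |v i| := by
        gcongr
        exact hS.mul_abs_le_sum_abs (mem_compl.1 hi)

lemma sqrt_mul_l2norm_le (hS : IsTopSupport k v S) :
    √k * l2norm v ≤ √k * l2norm ((S : Set ι).indicator v) + (∑ i ∈ Sᶜ, |v i|) / 2 := by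
  set s := l2norm ((S : Set ι).indicator v)
  set R := ∑ i ∈ Sᶜ, |v i|
  have hs : 0 ≤ √k * s := mul_nonneg (Real.sqrt_nonneg _) (l2norm_nonneg _)
  have hsplit : l2norm v ^ 2 = s ^ 2 + ∑ i ∈ Sᶜ, v i ^ 2 := by
    rw [l2norm_indicator_sq, sum_add_sum_compl, l2norm_sq_eq_sum]
  refine le_of_sq_le_sq ?_ (by positivity)
  calc (√k * l2norm v) ^ 2 = (√k * s) ^ 2 + k * ∑ i ∈ Sᶜ, v i ^ 2 := by
        rw [mul_pow, mul_pow, hsplit, Real.sq_sqrt (Nat.cast_nonneg k), mul_add]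
    _ ≤ (√k * s) ^ 2 + √k * s * R := by
        gcongr _ + ?_
        refine hS.mul_sum_compl_sq_le.trans ?_
        gcongr
        exact sum_abs_le_sqrt_mul_l2norm_indicator hS.card_le v
    _ ≤ (√k * s + R / 2) ^ 2 := by nlinarith [sq_nonneg R]

end IsTopSupport

end TopSupport

section Coherence

variable {ι κ : Type*} [Fintype ι]

/-- `A` has unit `ℓ2`-norm columns and mutual coherence at most `μ`. The field
`nonneg` excludes negative `μ` when `A` has no two distinct columns. -/
structure IsIncoherent (A : Matrix ι κ ℝ) (μ : ℝ) : Prop where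
  nonneg : 0 ≤ μ
  l2norm_col : ∀ j, l2norm (A.col j) = 1
  abs_col_dotProduct_le : Pairwise fun i j => |A.col i ⬝ᵥ A.col j| ≤ μ

lemma isIncoherent_mutualCoherence {m n : ℕ} {A : Matrix (Fin m) (Fin n) ℝ}
    (hA : ∀ j, l2norm (A.col j) = 1) : IsIncoherent A (mutualCoherence A) where
  nonneg := Real.iSup_nonneg fun _ => abs_nonneg _
  l2norm_col := hA
  abs_col_dotProduct_le i j hij :=
    le_ciSup (f := fun p : {p : Fin n × Fin n // p.1 ≠ p.2} => |A.col p.1.1 ⬝ᵥ A.col p.1.2|)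
      (Set.finite_range _).bddAbove ⟨(i, j), hij⟩

variable [Fintype κ] {A : Matrix ι κ ℝ} {μ : ℝ} {k : ℕ}

lemma mulVec_dotProduct_mulVec (A : Matrix ι κ ℝ) (p q : κ → ℝ) :
    A *ᵥ p ⬝ᵥ A *ᵥ q = ∑ i, ∑ j, p i * (A.col i ⬝ᵥ A.col j) * q j :=
  calc A *ᵥ p ⬝ᵥ A *ᵥ q = p ⬝ᵥ (Aᵀ * A) *ᵥ q := by
        rw [dotProduct_mulVec, vecMul_mulVec, ← dotProduct_mulVec]
    _ = ∑ i, ∑ j, p i * ((A.col i ⬝ᵥ A.col j) * q j) := sum_congr rfl fun _ _ => mul_sum ..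
    _ = _ := by simp only [mul_assoc]

namespace IsIncoherent

lemma abs_mulVec_dotProduct_mulVec_sub_le (hA : IsIncoherent A μ) (p q : κ → ℝ) :
    |A *ᵥ p ⬝ᵥ A *ᵥ q - p ⬝ᵥ q| ≤ μ * (l1norm p * l1norm q - |p| ⬝ᵥ |q|) := by
  classical
  have diag (u v : κ → ℝ) : u ⬝ᵥ v = ∑ i, ∑ j, if i = j then u i * v j else 0 := by
    simp [dotProduct]
  have entry (i j : κ) :
      |p i * (A.col i ⬝ᵥ A.col j) * q j - if i = j then p i * q j else 0| ≤
        μ * (|p i| * |q j| - if i = j then |p| i * |q| j else 0) := by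
    rcases eq_or_ne i j with rfl | hij
    · simp [← l2norm_sq_eq_dotProduct, hA.l2norm_col]
    · simp only [hij, if_false, sub_zero, abs_mul]
      nlinarith [mul_le_mul_of_nonneg_right (hA.abs_col_dotProduct_le hij)
        (mul_nonneg (abs_nonneg (p i)) (abs_nonneg (q j)))]
  rw [mulVec_dotProduct_mulVec, diag, diag, l1norm, l1norm, sum_mul_sum]
  simp only [← sum_sub_distrib, mul_sum]
  exact (abs_sum_le_sum_abs _ _).trans <| sum_le_sum fun i _ =>
    (abs_sum_le_sum_abs _ _).trans <| sum_le_sum fun j _ => entry i j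

lemma abs_l2norm_mulVec_sq_sub_le (hA : IsIncoherent A μ) {v : κ → ℝ}
    (hv : #{i | v i ≠ 0} ≤ k) :
    |l2norm (A *ᵥ v) ^ 2 - l2norm v ^ 2| ≤ (k - 1) * μ * l2norm v ^ 2 := by
  have habs : |v| ⬝ᵥ |v| = l2norm v ^ 2 := by simp [l2norm_sq_eq_dotProduct, dotProduct]
  have hGram := hA.abs_mulVec_dotProduct_mulVec_sub_le v v
  rw [habs, ← l2norm_sq_eq_dotProduct, ← l2norm_sq_eq_dotProduct, ← sq] at hGram
  linarith [mul_le_mul_of_nonneg_left (l1norm_sq_le_mul_l2norm_sq hv) hA.nonneg]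

lemma l2norm_mulVec_le (hA : IsIncoherent A μ) {v : κ → ℝ} (hv : #{i | v i ≠ 0} ≤ k) :
    l2norm (A *ᵥ v) ≤ √(1 + (k - 1) * μ) * l2norm v := by
  rw [← Real.sqrt_sq (l2norm_nonneg v), ← Real.sqrt_mul' _ (sq_nonneg _)]
  apply Real.le_sqrt_of_sq_le
  linarith [(abs_le.1 (hA.abs_l2norm_mulVec_sq_sub_le hv)).2]

lemma abs_mulVec_dotProduct_mulVec_le (hA : IsIncoherent A μ) {u v : κ → ℝ} (huv : v * u = 0) :
    |A *ᵥ v ⬝ᵥ A *ᵥ u| ≤ μ * (l1norm v * l1norm u) := by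
  have hdot : v ⬝ᵥ u = 0 := sum_eq_zero fun i _ => congrFun huv i
  have habs : |v| ⬝ᵥ |u| = 0 := sum_eq_zero fun i _ => by
    rw [Pi.abs_apply, Pi.abs_apply, ← abs_mul, ← Pi.mul_apply, huv, Pi.zero_apply, abs_zero]
  simpa only [hdot, habs, sub_zero] using hA.abs_mulVec_dotProduct_mulVec_sub_le v u

lemma l2norm_le_of_mul_eq_zero (hA : IsIncoherent A μ) (hμ : (k - 1) * μ < 1)
    {u v : κ → ℝ} (hv : #{i | v i ≠ 0} ≤ k) (huv : v * u = 0) :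
    l2norm v ≤ alpha1 k μ * l2norm (A *ᵥ (v + u)) + alpha2 k μ * l1norm u := by
  have hμ0 := hA.nonneg
  have hu := l1norm_nonneg u
  have hAvu := l2norm_nonneg (A *ᵥ (v + u))
  have lower : (1 - (k - 1) * μ) * l2norm v ^ 2 ≤ l2norm (A *ᵥ v) ^ 2 := by
    linarith [(abs_le.1 (hA.abs_l2norm_mulVec_sq_sub_le hv)).1]
  have expand : l2norm (A *ᵥ v) ^ 2 = A *ᵥ v ⬝ᵥ A *ᵥ (v + u) - A *ᵥ v ⬝ᵥ A *ᵥ u := by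
    rw [l2norm_sq_eq_dotProduct, mulVec_add, dotProduct_add, add_sub_cancel_right]
  have total : A *ᵥ v ⬝ᵥ A *ᵥ (v + u) ≤
      √(1 + (k - 1) * μ) * l2norm v * l2norm (A *ᵥ (v + u)) :=
    (dotProduct_le_l2norm_mul_l2norm _ _).trans (by gcongr; exact hA.l2norm_mulVec_le hv)
  have cross : -(A *ᵥ v ⬝ᵥ A *ᵥ u) ≤ μ * (√k * l2norm v * l1norm u) :=
    (neg_le_abs _).trans <| (hA.abs_mulVec_dotProduct_mulVec_le huv).trans
      (by gcongr; exact l1norm_le_sqrt_mul_l2norm hv)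
  have key : (1 - (k - 1) * μ) * l2norm v ≤
      √(1 + (k - 1) * μ) * l2norm (A *ᵥ (v + u)) + √k * μ * l1norm u := by
    rcases (l2norm_nonneg v).eq_or_lt with h0 | hpos
    · rw [← h0, mul_zero]
      positivity
    · refine le_of_mul_le_mul_left ?_ hpos
      linarith
  have hden : 0 < 1 - (k - 1) * μ := by linarith
  rw [alpha1, alpha2, div_mul_eq_mul_div, div_mul_eq_mul_div, ← add_div, le_div_iff₀ hden]
  linarith

lemma sqrt_mul_l2norm_indicator_le [DecidableEq κ] (hA : IsIncoherent A μ) (hμ : (k - 1) * μ < 1)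
    {S : Finset κ} (hS : #S ≤ k) (h : κ → ℝ) :
    √k * l2norm ((S : Set κ).indicator h) ≤
      √k * alpha1 k μ * l2norm (A *ᵥ h) + √k * alpha2 k μ * ∑ i ∈ Sᶜ, |h i| := by
  have hdisj : (S : Set κ).indicator h * ((Sᶜ : Finset κ) : Set κ).indicator h = 0 := by
    funext i
    by_cases hi : i ∈ S <;> simp [hi]
  have hsum : (S : Set κ).indicator h + ((Sᶜ : Finset κ) : Set κ).indicator h = h := by
    rw [coe_compl, Set.indicator_self_add_compl]
  have hbound := hA.l2norm_le_of_mul_eq_zero hμ ((card_indicator_ne_zero_le S h).trans hS) hdisj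
  rw [hsum, l1norm_indicator] at hbound
  linarith [mul_le_mul_of_nonneg_left hbound (Real.sqrt_nonneg k)]

end IsIncoherent

end Coherence

section Lasso

variable {ι κ : Type*} [Fintype ι] [Fintype κ] {A : Matrix ι κ ℝ} {μ lam : ℝ} {k : ℕ}
  {b : ι → ℝ} {x xs : κ → ℝ}

lemma l1norm_sub_l1norm_le_of_lasso_le (hlam : 0 < lam) (hb : l2norm (b - A *ᵥ x) ≤ lam)
    (hobj : l1norm xs + 1 / (2 * lam) * l2norm (b - A *ᵥ xs) ^ 2 ≤
      l1norm x + 1 / (2 * lam) * l2norm (b - A *ᵥ x) ^ 2) :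
    l1norm xs - l1norm x ≤
      l2norm (A *ᵥ (xs - x)) - l2norm (A *ᵥ (xs - x)) ^ 2 / (2 * lam) := by
  set w := A *ᵥ (xs - x) with hw
  have hres : b - A *ᵥ xs = (b - A *ᵥ x) - w := by
    rw [hw, mulVec_sub]
    abel
  have hcorr : (b - A *ᵥ x) ⬝ᵥ w ≤ lam * l2norm w :=
    (dotProduct_le_l2norm_mul_l2norm _ _).trans
      (mul_le_mul_of_nonneg_right hb (l2norm_nonneg w))
  rw [hres, l2norm_sub_sq] at hobj
  calc l1norm xs - l1norm x
      ≤ 1 / (2 * lam) * (2 * ((b - A *ᵥ x) ⬝ᵥ w) - l2norm w ^ 2) := by linarith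
    _ ≤ 1 / (2 * lam) * (2 * (lam * l2norm w) - l2norm w ^ 2) := by gcongr
    _ = l2norm w - l2norm w ^ 2 / (2 * lam) := by field_simp

lemma IsIncoherent.sum_compl_abs_le_of_lasso_le [DecidableEq κ] (hA : IsIncoherent A μ)
    (hμ : (k - 1) * μ < 1) (hlam : 0 < lam) (hb : l2norm (b - A *ᵥ x) ≤ lam)
    (hobj : l1norm xs + 1 / (2 * lam) * l2norm (b - A *ᵥ xs) ^ 2 ≤
      l1norm x + 1 / (2 * lam) * l2norm (b - A *ᵥ x) ^ 2)
    {T : Finset κ} (hT : #T ≤ k) :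
    (1 - √k * alpha2 k μ) * ∑ i ∈ Tᶜ, |(xs - x) i| ≤
      (√k * alpha1 k μ + 1) * l2norm (A *ᵥ (xs - x)) + 2 * ∑ i ∈ Tᶜ, |x i|
        - l2norm (A *ᵥ (xs - x)) ^ 2 / (2 * lam) := by
  linarith [sum_compl_abs_sub_sum_abs_le T x xs,
    l1norm_sub_l1norm_le_of_lasso_le hlam hb hobj,
    sum_abs_le_sqrt_mul_l2norm_indicator hT (xs - x),
    hA.sqrt_mul_l2norm_indicator_le hμ hT (xs - x)]

end Lasso

section Constants

lemma le_add_of_sq_le_mul_add {R : Type*} [CommRing R] [LinearOrder R] [IsStrictOrderedRing R]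
    {y p s : R} (hp : 0 ≤ p) (hs : 0 ≤ s) (h : y ^ 2 ≤ p * (y + s)) : y ≤ p + s := by
  by_contra! hlt
  nlinarith

lemma le_of_cone_le {a θ w R σ lam q X : ℝ} (ha : 0 ≤ a) (hθ : 0 ≤ θ) (hθ1 : θ < 1)
    (hR : 0 ≤ R) (hσ : 0 ≤ σ) (hlam : 0 < lam) (hq : 0 < q)
    (hX : q * X ≤ a * w + (θ + 1 / 2) * R)
    (hcone : (1 - θ) * R ≤ (a + 1) * w + 2 * σ - w ^ 2 / (2 * lam)) :
    X ≤ (3 * a + 2 * θ + 1) / (q * (1 - θ) * (a + 1)) * σ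
      + (2 * a * (1 - θ) + (2 * θ + 1) * (a + 1) / 4) * (a + 1) / (q * (1 - θ)) * lam := by
  have hθ' : 0 < 1 - θ := by linarith
  have hw : (a + 1) * w ≤ 2 * lam * (a + 1) ^ 2 + 2 * σ := by
    have hquad : w ^ 2 ≤ 2 * lam * ((a + 1) * w + 2 * σ) := by
      rw [← div_le_iff₀' (by positivity)]
      linarith [mul_nonneg hθ'.le hR]
    refine le_add_of_sq_le_mul_add (by positivity) (by positivity) ?_
    linarith [mul_le_mul_of_nonneg_left hquad (sq_nonneg (a + 1))]
  have hR' : (1 - θ) * R ≤ lam * (a + 1) ^ 2 / 2 + 2 * σ := by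
    have hsq : (a + 1) * w - w ^ 2 / (2 * lam) =
        lam * (a + 1) ^ 2 / 2 - (w - lam * (a + 1)) ^ 2 / (2 * lam) := by
      field_simp
      ring
    have hdefect : 0 ≤ (w - lam * (a + 1)) ^ 2 / (2 * lam) := by positivity
    linarith
  have hsplit : X ≤ (a * ((a + 1) * w) / (a + 1) + (θ + 1 / 2) * ((1 - θ) * R) / (1 - θ)) / q := by
    rw [le_div_iff₀ hq]
    field_simp
    linarith
  calc X ≤ _ := hsplit
    _ ≤ (a * (2 * lam * (a + 1) ^ 2 + 2 * σ) / (a + 1)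
          + (θ + 1 / 2) * (lam * (a + 1) ^ 2 / 2 + 2 * σ) / (1 - θ)) / q := by gcongr
    _ = _ := by
        field_simp
        ring

variable {k : ℕ} {μ : ℝ}

lemma alpha1_nonneg (hμ : (k - 1) * μ < 1) : 0 ≤ alpha1 k μ :=
  div_nonneg (Real.sqrt_nonneg _) (by linarith)

lemma alpha2_nonneg (hμ0 : 0 ≤ μ) (hμ : (k - 1) * μ < 1) : 0 ≤ alpha2 k μ :=
  div_nonneg (by positivity) (by linarith)

lemma sqrt_mul_alpha2_lt_one (hμ0 : 0 ≤ μ) (hμ : (2 * k - 1) * μ < 1) :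
    √k * alpha2 k μ < 1 := by
  rw [alpha2, ← mul_div_assoc, ← mul_assoc, Real.mul_self_sqrt (Nat.cast_nonneg k),
    div_lt_one (by linarith [mul_nonneg (Nat.cast_nonneg (α := ℝ) k) hμ0])]
  linarith

lemma fk_eq (k : ℕ) (t : ℝ) : fk k t = (√k * t) ^ 2 + 3 * (√k * t) + 3 := by
  rw [fk, mul_pow, Real.sq_sqrt (Nat.cast_nonneg k)]
  ring

lemma gk_eq (k : ℕ) (t : ℝ) : gk k t = 2 * (√k * t) ^ 2 + 4 * (√k * t) + 1 := by
  rw [gk, mul_pow, Real.sq_sqrt (Nat.cast_nonneg k)]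
  ring

end Constants

theorem IsIncoherent.l2norm_sub_le_of_lasso_le {ι κ : Type*} [Fintype ι] [Fintype κ]
    {A : Matrix ι κ ℝ} {μ : ℝ} (hA : IsIncoherent A μ) {k : ℕ} (hk : 1 ≤ k)
    (hμ : (2 * k - 1) * μ < 1) {lam : ℝ} (hlam : 0 < lam) {x xs : κ → ℝ} {b : ι → ℝ}
    (hb : l2norm (b - A *ᵥ x) ≤ lam)
    (hobj : l1norm xs + 1 / (2 * lam) * l2norm (b - A *ᵥ xs) ^ 2 ≤
      l1norm x + 1 / (2 * lam) * l2norm (b - A *ᵥ x) ^ 2)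
    {xk : κ → ℝ} (hxk : #{i | xk i ≠ 0} ≤ k) :
    l2norm (xs - x) ≤
      (3 * (√k * alpha1 k μ) + 2 * (√k * alpha2 k μ) + 1)
        / (√k * (1 - √k * alpha2 k μ) * (√k * alpha1 k μ + 1)) * l1norm (x - xk)
      + (2 * (√k * alpha1 k μ) * (1 - √k * alpha2 k μ)
          + (2 * (√k * alpha2 k μ) + 1) * (√k * alpha1 k μ + 1) / 4)
        * (√k * alpha1 k μ + 1) / (√k * (1 - √k * alpha2 k μ)) * lam := by
  classical
  have hμ' : (k - 1) * μ < 1 := by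
    linarith [mul_nonneg (Nat.cast_nonneg (α := ℝ) k) hA.nonneg]
  have hα1 : 0 ≤ √k * alpha1 k μ := mul_nonneg (Real.sqrt_nonneg _) (alpha1_nonneg hμ')
  have hα2 : 0 ≤ √k * alpha2 k μ := mul_nonneg (Real.sqrt_nonneg _) (alpha2_nonneg hA.nonneg hμ')
  obtain ⟨S, hS⟩ := exists_isTopSupport k (xs - x)
  have hST := hS.sum_compl_abs_le hxk
  refine le_of_cone_le hα1 hα2 (sqrt_mul_alpha2_lt_one hA.nonneg hμ)
    (R := ∑ i ∈ ({i | xk i ≠ 0} : Finset κ)ᶜ, |(xs - x) i|)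
    (sum_nonneg fun _ _ => abs_nonneg _) (l1norm_nonneg _) hlam (by positivity)
    (w := l2norm (A *ᵥ (xs - x))) ?_ ?_
  · linarith [hS.sqrt_mul_l2norm_le, mul_le_mul_of_nonneg_left hST hα2,
      hA.sqrt_mul_l2norm_indicator_le hμ' hS.card_le (xs - x)]
  · linarith [hA.sum_compl_abs_le_of_lasso_le hμ' hlam hb hobj hxk,
      sum_compl_support_abs_le_l1norm_sub x xk]

theorem stmt_8_general {ι κ : Type*} [Fintype ι] [Fintype κ] (A : Matrix ι κ ℝ)
    (μ : ℝ) (hA : IsIncoherent A μ) (k : ℕ) (hk : 1 ≤ k) (hμ : μ < 1 / (2 * (k : ℝ) - 1))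
    (lam : ℝ) (hlam : 0 < lam) (x : κ → ℝ) (b : ι → ℝ) (hb : l2norm (b - A *ᵥ x) ≤ lam)
    (xs : κ → ℝ)
    (hobj : l1norm xs + 1 / (2 * lam) * l2norm (b - A *ᵥ xs) ^ 2 ≤
      l1norm x + 1 / (2 * lam) * l2norm (b - A *ᵥ x) ^ 2)
    (xk : κ → ℝ) (hxk : #{i | xk i ≠ 0} ≤ k) :
    l2norm (xs - x) ≤
      (2 * √k * alpha1 k μ * fk k (alpha2 k μ) + 2 * gk k (alpha2 k μ))
        / (√k * (1 - √k * alpha2 k μ) * (√k * alpha1 k μ + 1)) * l1norm (x - xk)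
      + (√k * alpha1 k μ * (5 + 2 * √k * alpha2 k μ) + 2 * gk k (alpha2 k μ))
        * (√k * alpha1 k μ + 1) / (√k * (1 - √k * alpha2 k μ)) * lam := by
  have hk' : (1 : ℝ) ≤ k := by exact_mod_cast hk
  have hμ0 := hA.nonneg
  have hμ2 : (2 * k - 1) * μ < 1 := (lt_div_iff₀' (by linarith)).1 hμ
  have hμ1 : (k - 1) * μ < 1 := by nlinarith
  have hα1 : 0 ≤ √k * alpha1 k μ := mul_nonneg (Real.sqrt_nonneg _) (alpha1_nonneg hμ1)
  have hα2 : 0 ≤ √k * alpha2 k μ := mul_nonneg (Real.sqrt_nonneg _) (alpha2_nonneg hμ0 hμ1)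
  have hα2' : 0 < 1 - √k * alpha2 k μ := sub_pos.2 (sqrt_mul_alpha2_lt_one hμ0 hμ2)
  have hα12 := mul_nonneg hα1 hα2
  have hx := l1norm_nonneg (x - xk)
  refine (hA.l2norm_sub_le_of_lasso_le hk hμ2 hlam hb hobj hxk).trans ?_
  rw [fk_eq, gk_eq]
  gcongr ?_ / _ * _ + ?_ * _ / _ * _
  · nlinarith [mul_nonneg hα12 hα2]
  · nlinarith

theorem stmt_8 {m n : ℕ} (A : Matrix (Fin m) (Fin n) ℝ)
    (hA : ∀ j, l2norm (fun i => A i j) = 1)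
    (k : ℕ) (hk : 2 ≤ k)
    (hμ : mutualCoherence A < 1 / (2 * (k : ℝ) - 1))
    (lam : ℝ) (hlam : 0 < lam)
    (x : Fin n → ℝ) (z : Fin m → ℝ) (b : Fin m → ℝ) (hb : b = A.mulVec x + z)
    (hz : l2norm z ≤ lam)
    (xs : Fin n → ℝ)
    (hmin : ∀ u : Fin n → ℝ,
      l1norm xs + 1 / (2 * lam) * l2norm (b - A.mulVec xs) ^ 2 ≤
        l1norm u + 1 / (2 * lam) * l2norm (b - A.mulVec u) ^ 2)
    (xk : Fin n → ℝ) (hxk1 : sparse k xk)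
    (hxk2 : ∀ y : Fin n → ℝ, sparse k y → l2norm (xk - x) ≤ l2norm (y - x)) :
    l2norm (xs - x) ≤
      (2 * Real.sqrt k * alpha1 k (mutualCoherence A) * fk k (alpha2 k (mutualCoherence A))
          + 2 * gk k (alpha2 k (mutualCoherence A)))
        / (Real.sqrt k * (1 - Real.sqrt k * alpha2 k (mutualCoherence A))
          * (Real.sqrt k * alpha1 k (mutualCoherence A) + 1)) * l1norm (x - xk)
      + (Real.sqrt k * alpha1 k (mutualCoherence A)
            * (5 + 2 * Real.sqrt k * alpha2 k (mutualCoherence A))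
          + 2 * gk k (alpha2 k (mutualCoherence A)))
        * (Real.sqrt k * alpha1 k (mutualCoherence A) + 1)
        / (Real.sqrt k * (1 - Real.sqrt k * alpha2 k (mutualCoherence A))) * lam := by
  subst hb
  exact stmt_8_general A _ (isIncoherent_mutualCoherence hA) k (by lia) hμ lam hlam x _
    (by simpa only [add_sub_cancel_left]) xs (hmin x) xk hxk1
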